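/- Let v : ℝ → [0,∞) be a bounded, twice continuously differentiable function with bounded first and second derivatives, and suppose there is a point x_0 ∈ ℝ with v′(x_0) = 0 and v″(x_0) < −1. Let Z be a standard Gaussian random variable and define φ(σ) = E[exp(x_0 + σZ + v(x_0 + σZ))] for σ ≥ 0. Then φ′(x_0-version at σ=0) satisfies φ′(0) = 0 and φ″(0) = e^{x_0+v(x_0)}((1+v′(x_0))² + v″(x_0)) < 0; consequently there exists σ_0 > 0 such that φ is strictly decreasing on [0,σ_0], and in particular E[exp(x_0 + σZ + v(x_0 + σZ))] < e^{x_0+v(x_0)} for every σ ∈ (0,σ_0]. -/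

import Mathlib

open MeasureTheory ProbabilityTheory Real Set

/-!
Put `f x = exp (x + v x)`, so that `φ(σ) = E[f (x₀ + σZ)]`. The function `f` and its first two
derivatives grow at most exponentially while `Z` has all exponential moments, so one may
differentiate under the expectation: `φ⁽ᵏ⁾(0) = E[Zᵏ] f⁽ᵏ⁾(x₀)` for `k ≤ 2`. As `E[Z] = 0`, the
first derivative vanishes at `0`, and the negative sign of `f⁽²⁾ = ((1 + v⁽¹⁾)² + v⁽²⁾) f` at `x₀`
makes it negative immediately to the right of `0`.
-/

open Filter Topology Asymptotics

/-- A real function has at most exponential growth if it is bounded by a multiple of `exp (a * |x|)`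
for some rate `a`. Expectations of such functions of `X` are finite when `X` has all exponential
moments. The filter `⊤` makes the bound hold on all of `ℝ`, not just near infinity. -/
def HasExpGrowth (f : ℝ → ℝ) : Prop :=
  ∃ a : ℝ, f =O[⊤] fun x ↦ exp (a * |x|)

namespace HasExpGrowth

variable {f g : ℝ → ℝ}

lemma of_abs_le {M : ℝ} (hf : ∀ x, |f x| ≤ M) : HasExpGrowth f :=
  ⟨0, isBigO_top.2 ⟨M, fun x ↦ by simpa using hf x⟩⟩

lemma mul (hf : HasExpGrowth f) (hg : HasExpGrowth g) : HasExpGrowth fun x ↦ f x * g x := by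
  obtain ⟨a, ha⟩ := hf
  obtain ⟨b, hb⟩ := hg
  refine ⟨a + b, ?_⟩
  simpa only [add_mul, exp_add] using ha.mul hb

lemma exists_abs_comp_add_mul_le (hf : HasExpGrowth f) (x₀ r : ℝ) :
    ∃ C b : ℝ, ∀ s z, |s| ≤ r → |f (x₀ + s * z)| ≤ C * exp (b * |z|) := by
  obtain ⟨a, hfa⟩ := hf
  obtain ⟨C, hC, hfC⟩ := hfa.exists_nonneg
  refine ⟨C * exp (|a| * |x₀|), |a| * r, fun s z hs ↦ ?_⟩
  have hline : |x₀ + s * z| ≤ |x₀| + r * |z| :=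
    (abs_add_le _ _).trans (by rw [abs_mul]; gcongr)
  calc |f (x₀ + s * z)| ≤ C * exp (a * |x₀ + s * z|) := by
        simpa using eventually_top.1 hfC.bound (x₀ + s * z)
    _ ≤ C * exp (|a| * (|x₀| + r * |z|)) := by gcongr; exact le_abs_self a
    _ = C * exp (|a| * |x₀|) * exp (|a| * r * |z|) := by rw [mul_assoc, ← exp_add]; ring_nf

end HasExpGrowth

section DifferentiationUnderExpectation

variable {Ω : Type*} {mΩ : MeasurableSpace Ω} {μ : Measure Ω} {X : Ω → ℝ}

lemma aemeasurable_of_integrableExpSet_eq_univ (hX : integrableExpSet X μ = univ) :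
    AEMeasurable X μ :=
  aemeasurable_of_mem_interior_integrableExpSet (v := 0) (by simp [hX])

lemma integrable_pow_abs_mul_exp_mul_abs (hX : integrableExpSet X μ = univ) (n : ℕ) (a : ℝ) :
    Integrable (fun ω ↦ |X ω| ^ n * exp (a * |X ω|)) μ := by
  have hexp (t : ℝ) : Integrable (fun ω ↦ exp (t * X ω)) μ := eq_univ_iff_forall.1 hX t
  have habs : Integrable (fun ω ↦ |X ω| ^ n * exp (|a| * |X ω|)) μ := by
    simpa using integrable_pow_abs_mul_exp_add_of_integrable_exp_mul (v := 0) (t := |a| + 1)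
      (hexp _) (hexp _) (abs_nonneg a) ((lt_add_one _).trans_le (le_abs_self _)) n
  have hXm := aemeasurable_of_integrableExpSet_eq_univ hX
  refine habs.mono' (by fun_prop) (.of_forall fun ω ↦ ?_)
  rw [norm_of_nonneg (by positivity)]
  gcongr
  exact le_abs_self a

lemma aestronglyMeasurable_pow_mul_comp_add_mul {g : ℝ → ℝ} (hX : AEMeasurable X μ)
    (hg : Continuous g) (x₀ s : ℝ) (k : ℕ) :
    AEStronglyMeasurable (fun ω ↦ X ω ^ k * g (x₀ + s * X ω)) μ :=
  ((hX.pow_const k).mul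
    (hg.measurable.comp_aemeasurable ((hX.const_mul s).const_add x₀))).aestronglyMeasurable

lemma hasDerivAt_integral_pow_mul_comp_add_mul {g g' : ℝ → ℝ}
    (hX : integrableExpSet X μ = univ) (hgg' : ∀ x, HasDerivAt g (g' x) x) (hg'c : Continuous g')
    (hg : HasExpGrowth g) (hg' : HasExpGrowth g') (x₀ : ℝ) (k : ℕ) (s₀ : ℝ) :
    HasDerivAt (fun s ↦ ∫ ω, X ω ^ k * g (x₀ + s * X ω) ∂μ)
      (∫ ω, X ω ^ (k + 1) * g' (x₀ + s₀ * X ω) ∂μ) s₀ := by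
  have hXm := aemeasurable_of_integrableExpSet_eq_univ hX
  have hgc : Continuous g := continuous_iff_continuousAt.2 fun x ↦ (hgg' x).continuousAt
  obtain ⟨C, b, hC⟩ := hg.exists_abs_comp_add_mul_le x₀ |s₀|
  obtain ⟨C', b', hC'⟩ := hg'.exists_abs_comp_add_mul_le x₀ (|s₀| + 1)
  refine (hasDerivAt_integral_of_dominated_loc_of_deriv_le
    (F' := fun s ω ↦ X ω ^ (k + 1) * g' (x₀ + s * X ω))
    (bound := fun ω ↦ C' * (|X ω| ^ (k + 1) * exp (b' * |X ω|)))
    (Metric.ball_mem_nhds s₀ one_pos)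
    (.of_forall fun s ↦ aestronglyMeasurable_pow_mul_comp_add_mul hXm hgc x₀ s k) ?integrable
    (aestronglyMeasurable_pow_mul_comp_add_mul hXm hg'c x₀ s₀ (k + 1)) ?bound
    ((integrable_pow_abs_mul_exp_mul_abs hX (k + 1) b').const_mul C') ?deriv).2
  case integrable =>
    refine ((integrable_pow_abs_mul_exp_mul_abs hX k b).const_mul C).mono'
      (aestronglyMeasurable_pow_mul_comp_add_mul hXm hgc x₀ s₀ k) (.of_forall fun ω ↦ ?_)
    rw [norm_mul, norm_pow, norm_eq_abs, norm_eq_abs, mul_left_comm]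
    gcongr
    exact hC s₀ (X ω) le_rfl
  case bound =>
    refine .of_forall fun ω s hs ↦ ?_
    have hs' : |s| ≤ |s₀| + 1 := by
      have hdist : |s - s₀| < 1 := by simpa [dist_eq] using hs
      linarith [abs_sub_abs_le_abs_sub s s₀]
    rw [norm_mul, norm_pow, norm_eq_abs, norm_eq_abs, mul_left_comm]
    gcongr
    exact hC' s (X ω) hs'
  case deriv =>
    refine .of_forall fun ω s _ ↦ ?_
    have hline : HasDerivAt (fun s ↦ x₀ + s * X ω) (X ω) s := by
      simpa using ((hasDerivAt_id s).mul_const (X ω)).const_add x₀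
    exact (((hgg' _).comp s hline).const_mul (X ω ^ k)).congr_deriv (by ring)

variable {f : ℝ → ℝ} {n : ℕ}

lemma hasDerivAt_integral_pow_mul_iteratedDeriv_comp_add_mul (hX : integrableExpSet X μ = univ)
    (hf : ContDiff ℝ n f) (hgrowth : ∀ k ≤ n, HasExpGrowth (iteratedDeriv k f)) (x₀ : ℝ) {k : ℕ}
    (hk : k < n) (s : ℝ) :
    HasDerivAt (fun s ↦ ∫ ω, X ω ^ k * iteratedDeriv k f (x₀ + s * X ω) ∂μ)
      (∫ ω, X ω ^ (k + 1) * iteratedDeriv (k + 1) f (x₀ + s * X ω) ∂μ) s := by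
  refine hasDerivAt_integral_pow_mul_comp_add_mul hX (fun x ↦ ?_)
    (hf.continuous_iteratedDeriv (k + 1) (mod_cast hk)) (hgrowth k hk.le) (hgrowth (k + 1) hk)
    x₀ k s
  rw [iteratedDeriv_succ]
  exact (hf.differentiable_iteratedDeriv k (mod_cast hk) x).hasDerivAt

lemma differentiable_integral_comp_add_mul (hX : integrableExpSet X μ = univ)
    (hf : ContDiff ℝ n f) (hgrowth : ∀ k ≤ n, HasExpGrowth (iteratedDeriv k f)) (hn : 0 < n)
    (x₀ : ℝ) : Differentiable ℝ fun s ↦ ∫ ω, f (x₀ + s * X ω) ∂μ := fun s ↦ by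
  simpa using (hasDerivAt_integral_pow_mul_iteratedDeriv_comp_add_mul hX hf hgrowth x₀ hn
    s).differentiableAt

lemma iteratedDeriv_integral_comp_add_mul (hX : integrableExpSet X μ = univ)
    (hf : ContDiff ℝ n f) (hgrowth : ∀ k ≤ n, HasExpGrowth (iteratedDeriv k f)) (x₀ : ℝ) {k : ℕ}
    (hk : k ≤ n) :
    iteratedDeriv k (fun s ↦ ∫ ω, f (x₀ + s * X ω) ∂μ) =
      fun s ↦ ∫ ω, X ω ^ k * iteratedDeriv k f (x₀ + s * X ω) ∂μ := by
  induction k with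
  | zero => simp
  | succ k ih =>
    rw [iteratedDeriv_succ, ih (Nat.le_of_succ_le hk)]
    exact funext fun s ↦
      (hasDerivAt_integral_pow_mul_iteratedDeriv_comp_add_mul hX hf hgrowth x₀ hk s).deriv

lemma iteratedDeriv_integral_comp_add_mul_zero (hX : integrableExpSet X μ = univ)
    (hf : ContDiff ℝ n f) (hgrowth : ∀ k ≤ n, HasExpGrowth (iteratedDeriv k f)) (x₀ : ℝ) {k : ℕ}
    (hk : k ≤ n) :
    iteratedDeriv k (fun s ↦ ∫ ω, f (x₀ + s * X ω) ∂μ) 0 =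
      (∫ ω, X ω ^ k ∂μ) * iteratedDeriv k f x₀ := by
  simp [iteratedDeriv_integral_comp_add_mul hX hf hgrowth x₀ hk, integral_mul_const]

end DifferentiationUnderExpectation

lemma exists_strictAntiOn_Icc_of_deriv_deriv_neg {f : ℝ → ℝ} {a : ℝ}
    (hf₂ : deriv (deriv f) a < 0) (hf₁ : deriv f a = 0) (hf : ContinuousAt f a) :
    ∃ b > a, StrictAntiOn f (Icc a b) := by
  have hneg : ∀ᶠ x in 𝓝[>] a, deriv f x < 0 :=
    deriv_neg_right_of_sign_deriv
      (nhdsWithin_le_nhds (eventually_nhdsWithin_sign_eq_of_deriv_neg hf₂ hf₁))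
  obtain ⟨b, hab, hb⟩ := mem_nhdsGT_iff_exists_Ioc_subset.1 hneg
  refine ⟨b, hab, strictAntiOn_of_deriv_neg (convex_Icc a b) (fun x hx ↦ ?_) fun x hx ↦ ?_⟩
  · rcases hx.1.eq_or_lt with rfl | hax
    · exact hf.continuousWithinAt
    · exact (differentiableAt_of_deriv_ne_zero
        (hb ⟨hax, hx.2⟩).ne).continuousAt.continuousWithinAt
  · rw [interior_Icc] at hx
    exact hb (Ioo_subset_Ioc_self hx)

section ExpIdAdd

variable {v : ℝ → ℝ}

lemma deriv_exp_id_add (hv : Differentiable ℝ v) :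
    deriv (fun x ↦ exp (x + v x)) = fun x ↦ (1 + deriv v x) * exp (x + v x) := by
  ext x
  exact (((hasDerivAt_id x).add (hv x).hasDerivAt).exp.congr_deriv (mul_comm _ _)).deriv

lemma iteratedDeriv_two_exp_id_add (hv : ContDiff ℝ 2 v) :
    iteratedDeriv 2 (fun x ↦ exp (x + v x)) =
      fun x ↦ ((1 + deriv v x) ^ 2 + iteratedDeriv 2 v x) * exp (x + v x) := by
  have hv₁ : Differentiable ℝ v := hv.differentiable (by norm_num)
  have hv₂ : Differentiable ℝ (deriv v) := by
    simpa using hv.differentiable_iteratedDeriv 1 (by norm_num)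
  ext x
  have hexp : DifferentiableAt ℝ (fun x ↦ exp (x + v x)) x := by fun_prop
  rw [iteratedDeriv_succ, iteratedDeriv_one, deriv_exp_id_add hv₁,
    deriv_fun_mul ((hv₂ x).const_add 1) hexp, deriv_const_add, deriv_exp_id_add hv₁,
    iteratedDeriv_succ, iteratedDeriv_one]
  ring

variable {M : ℝ}

lemma hasExpGrowth_exp_id_add (hvM : ∀ x, v x ≤ M) : HasExpGrowth fun x ↦ exp (x + v x) := by
  refine ⟨1, isBigO_top.2 ⟨exp M, fun x ↦ ?_⟩⟩
  rw [norm_of_nonneg (exp_pos _).le, norm_of_nonneg (exp_pos _).le, ← exp_add, exp_le_exp, one_mul]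
  linarith [hvM x, le_abs_self x]

lemma hasExpGrowth_iteratedDeriv_exp_id_add (hv : ContDiff ℝ 2 v) (hvM : ∀ x, v x ≤ M)
    (hv₁M : ∀ x, |deriv v x| ≤ M) (hv₂M : ∀ x, |iteratedDeriv 2 v x| ≤ M) :
    ∀ k ≤ 2, HasExpGrowth (iteratedDeriv k fun x ↦ exp (x + v x)) := by
  have hexp := hasExpGrowth_exp_id_add hvM
  have habs (x : ℝ) : |1 + deriv v x| ≤ 1 + M :=
    (abs_add_le _ _).trans (by rw [abs_one]; gcongr; exact hv₁M x)
  have habs_sq (x : ℝ) : |(1 + deriv v x) ^ 2 + iteratedDeriv 2 v x| ≤ (1 + M) ^ 2 + M :=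
    (abs_add_le _ _).trans (by rw [abs_pow]; gcongr; exacts [habs x, hv₂M x])
  intro k hk
  interval_cases k
  · simpa using hexp
  · rw [iteratedDeriv_one, deriv_exp_id_add (hv.differentiable (by norm_num))]
    exact (HasExpGrowth.of_abs_le habs).mul hexp
  · rw [iteratedDeriv_two_exp_id_add hv]
    exact (HasExpGrowth.of_abs_le habs_sq).mul hexp

end ExpIdAdd

lemma integrableExpSet_eq_univ_of_hasLaw_gaussianReal {Ω : Type*} {mΩ : MeasurableSpace Ω}
    {μ : Measure Ω} {Z : Ω → ℝ} {m : ℝ} {σsq : NNReal} (hZ : HasLaw Z (gaussianReal m σsq) μ) :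
    integrableExpSet Z μ = univ := by
  refine eq_univ_of_forall fun t ↦ ?_
  have hexp := integrable_exp_mul_gaussianReal (μ := m) (v := σsq) t
  rw [← hZ.map_eq] at hexp
  exact hexp.comp_aemeasurable hZ.aemeasurable

theorem stmt_7_general {Ω : Type*} [MeasurableSpace Ω] (μ : Measure Ω) [IsProbabilityMeasure μ]
    (Z : Ω → ℝ) (hZexp : integrableExpSet Z μ = univ) (hZmean : μ[Z] = 0) (hZvar : 0 < Var[Z; μ])
    (v : ℝ → ℝ) (hvC2 : ContDiff ℝ 2 v) (M : ℝ) (hvM : ∀ x, v x ≤ M)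
    (hvdM : ∀ x, |deriv v x| ≤ M ∧ |iteratedDeriv 2 v x| ≤ M)
    (x₀ : ℝ) (hx₀ : (1 + deriv v x₀) ^ 2 + iteratedDeriv 2 v x₀ < 0) :
    deriv (fun s : ℝ ↦ ∫ ω, exp (x₀ + s * Z ω + v (x₀ + s * Z ω)) ∂μ) 0 = 0 ∧
    iteratedDeriv 2 (fun s : ℝ ↦ ∫ ω, exp (x₀ + s * Z ω + v (x₀ + s * Z ω)) ∂μ) 0
      = Var[Z; μ] * (exp (x₀ + v x₀) * ((1 + deriv v x₀) ^ 2 + iteratedDeriv 2 v x₀)) ∧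
    iteratedDeriv 2 (fun s : ℝ ↦ ∫ ω, exp (x₀ + s * Z ω + v (x₀ + s * Z ω)) ∂μ) 0 < 0 ∧
    ∃ σ₀ > (0 : ℝ),
      StrictAntiOn (fun s : ℝ ↦ ∫ ω, exp (x₀ + s * Z ω + v (x₀ + s * Z ω)) ∂μ) (Icc 0 σ₀) ∧
      ∀ s ∈ Ioc (0 : ℝ) σ₀,
        ∫ ω, exp (x₀ + s * Z ω + v (x₀ + s * Z ω)) ∂μ < exp (x₀ + v x₀) := by
  set φ : ℝ → ℝ := fun s ↦ ∫ ω, exp (x₀ + s * Z ω + v (x₀ + s * Z ω)) ∂μ with hφ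
  have hfC2 : ContDiff ℝ (2 : ℕ) fun x ↦ exp (x + v x) := (contDiff_id.add hvC2).exp
  have hgrowth := hasExpGrowth_iteratedDeriv_exp_id_add hvC2 hvM (fun x ↦ (hvdM x).1)
    fun x ↦ (hvdM x).2
  have hφ_zero : φ 0 = exp (x₀ + v x₀) := by simp [hφ]
  have hφ_deriv : deriv φ 0 = 0 := by
    simpa [hZmean] using
      iteratedDeriv_integral_comp_add_mul_zero hZexp hfC2 hgrowth x₀ one_le_two
  have hφ_deriv2 : iteratedDeriv 2 φ 0 =
      Var[Z; μ] * (exp (x₀ + v x₀) * ((1 + deriv v x₀) ^ 2 + iteratedDeriv 2 v x₀)) := by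
    rw [variance_of_integral_eq_zero (aemeasurable_of_integrableExpSet_eq_univ hZexp) hZmean,
      mul_comm (exp _), iteratedDeriv_integral_comp_add_mul_zero hZexp hfC2 hgrowth x₀ le_rfl,
      iteratedDeriv_two_exp_id_add hvC2]
  have hφ_neg : iteratedDeriv 2 φ 0 < 0 :=
    hφ_deriv2 ▸ mul_neg_of_pos_of_neg hZvar (mul_neg_of_pos_of_neg (exp_pos _) hx₀)
  obtain ⟨σ₀, hσ₀, hanti⟩ : ∃ σ₀ > 0, StrictAntiOn φ (Icc 0 σ₀) :=
    exists_strictAntiOn_Icc_of_deriv_deriv_neg (by simpa [iteratedDeriv_succ] using hφ_neg) hφ_deriv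
      (differentiable_integral_comp_add_mul hZexp hfC2 hgrowth two_pos x₀).continuous.continuousAt
  exact ⟨hφ_deriv, hφ_deriv2, hφ_neg, σ₀, hσ₀, hanti, fun s hs ↦
    hφ_zero ▸ hanti (left_mem_Icc.2 hσ₀.le) (Ioc_subset_Icc_self hs) hs.1⟩

/-- Counter-example in discrete time: let `v ≥ 0` be bounded and `C²` with bounded first and
second derivatives, with `v'(x₀) = 0` and `v''(x₀) < -1`, `Z` standard Gaussian and
`φ(σ) = E[exp(x₀ + σZ + v(x₀ + σZ))]`. Then `φ'(0) = 0`,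
`φ''(0) = e^{x₀+v(x₀)}((1+v'(x₀))² + v''(x₀)) < 0`, and `φ` is strictly decreasing on some
`[0,σ₀]`, so `φ(σ) < e^{x₀+v(x₀)}` for `σ ∈ (0,σ₀]`. -/
theorem stmt_7
    {Ω : Type*} [MeasurableSpace Ω] (μ : Measure Ω) [IsProbabilityMeasure μ]
    (Z : Ω → ℝ) (hZmeas : Measurable Z)
    (hZlaw : Measure.map Z μ = ProbabilityTheory.gaussianReal 0 1)
    (v : ℝ → ℝ) (hvnonneg : ∀ x, 0 ≤ v x)
    (hvC2 : ContDiff ℝ 2 v)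
    (Mv : ℝ) (hvbdd : ∀ x, v x ≤ Mv)
    (hvdbdd : ∀ x, |deriv v x| ≤ Mv ∧ |iteratedDeriv 2 v x| ≤ Mv)
    (x₀ : ℝ) (hd1 : deriv v x₀ = 0) (hd2 : iteratedDeriv 2 v x₀ < -1) :
    deriv (fun s : ℝ => ∫ ω, Real.exp (x₀ + s * Z ω + v (x₀ + s * Z ω)) ∂μ) 0 = 0 ∧
    iteratedDeriv 2 (fun s : ℝ => ∫ ω, Real.exp (x₀ + s * Z ω + v (x₀ + s * Z ω)) ∂μ) 0
      = Real.exp (x₀ + v x₀) * ((1 + deriv v x₀) ^ 2 + iteratedDeriv 2 v x₀) ∧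
    iteratedDeriv 2 (fun s : ℝ => ∫ ω, Real.exp (x₀ + s * Z ω + v (x₀ + s * Z ω)) ∂μ) 0
      < 0 ∧
    ∃ σ₀ > (0 : ℝ),
      StrictAntiOn (fun s : ℝ => ∫ ω, Real.exp (x₀ + s * Z ω + v (x₀ + s * Z ω)) ∂μ)
        (Set.Icc 0 σ₀) ∧
      ∀ s ∈ Set.Ioc (0 : ℝ) σ₀,
        (∫ ω, Real.exp (x₀ + s * Z ω + v (x₀ + s * Z ω)) ∂μ) < Real.exp (x₀ + v x₀) := by
  have hZ : HasLaw Z (gaussianReal 0 1) μ := ⟨hZmeas.aemeasurable, hZlaw⟩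
  have hZvar : Var[Z; μ] = 1 := by simp [hZ.variance_eq]
  simpa only [hZvar, one_mul] using stmt_7_general μ Z
    (integrableExpSet_eq_univ_of_hasLaw_gaussianReal hZ) (by simp [hZ.integral_eq])
    (by simp [hZvar]) v hvC2 Mv hvbdd hvdbdd x₀ (by rw [hd1]; linarith)
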